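/- Let p be a prime with p ≡ 1 (mod 3), and write p = A² + 3B² with integers A, B and A ≡ 1 (mod 3). If 3 ∣ B, then V_p(x² + 4/x) = V_p(x + 2/x²) = (2p − 1 + 2A)/3. If 3 ∤ B, then V_p(x² + 4/x) = V_p(x + 2/x²) = (2p − 1 − A + 3(B/3)B)/3, where (B/3) is the Legendre symbol of B modulo 3. -/

import Mathlib

lemma aux_card_mod {F : Type*} [DecidableEq F] (s : Finset F) (f : F → F) (q : ℕ)
    [Fact q.Prime] (hf : ∀ x ∈ s, f x ∈ s) (hq : ∀ x ∈ s, f^[q] x = x) :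
    s.card ≡ (s.filter (fun x => f x = x)).card [MOD q] := by
  classical
  let g : Function.End s := fun x => ⟨f x.1, hf x.1 x.2⟩
  have hit : ∀ (k : ℕ) (x : s), ((g ^ k) x).1 = f^[k] x.1 := by
    intro k
    induction k with
    | zero => intro x; rfl
    | succ k ih =>
      intro x
      rw [pow_succ, Function.iterate_succ_apply, ← show (g x).1 = f x.1 from rfl, ← ih]
      rfl
  have hg : g ^ q ^ 1 = 1 := by
    funext x
    apply Subtype.ext
    rw [pow_one, hit, hq x.1 x.2]
    rfl
  have h := Equiv.Perm.card_fixedPoints_modEq (f := g) (p := q) (n := 1) hg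
  rw [Fintype.card_coe] at h
  refine h.trans ?_
  have : Fintype.card (Function.fixedPoints g) = (s.filter (fun x => f x = x)).card := by
    rw [← Fintype.card_coe]
    apply Fintype.card_congr
    refine ⟨fun x => ⟨x.1.1, ?_⟩, fun x => ⟨⟨x.1, (Finset.mem_filter.mp x.2).1⟩, ?_⟩, ?_, ?_⟩
    · rw [Finset.mem_filter]
      exact ⟨x.1.2, congrArg Subtype.val x.2⟩
    · exact Subtype.ext (Finset.mem_filter.mp x.2).2
    · intro x; rfl
    · intro x; rfl
  exact this ▸ Nat.ModEq.refl _

/-- number of `t` with `χ (t (1-t)) = z` -/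
noncomputable def cnt {p : ℕ} [Fact p.Prime] (χ : MulChar (ZMod p) ℂ) (z : ℂ) : ℕ :=
  ((Finset.univ : Finset (ZMod p)).filter (fun t => χ (t * (1 - t)) = z)).card

lemma chi_pow {p : ℕ} [Fact p.Prime] (χ : MulChar (ZMod p) ℂ) (h3 : orderOf χ = 3)
    (a : ZMod p) (ha : a ≠ 0) : χ a ^ 3 = 1 := by
  have h : χ ^ 3 = 1 := by rw [← h3]; exact pow_orderOf_eq_one χ
  have := congrArg (fun c : MulChar (ZMod p) ℂ => c a) h
  simpa [MulChar.pow_apply' χ (three_ne_zero), MulChar.one_apply (isUnit_iff_ne_zero.mpr ha)] using this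

lemma sum_f {p : ℕ} [Fact p.Prime] (χ : MulChar (ZMod p) ℂ) (h3 : orderOf χ = 3)
    (ω : ℂ) (hω : IsPrimitiveRoot ω 3) (f : ℂ → ℂ) (f0 : f 0 = 0) :
    ∑ t : ZMod p, f (χ (t * (1 - t))) =
      cnt χ 1 * f 1 + cnt χ ω * f ω + cnt χ (ω ^ 2) * f (ω ^ 2) := by
  have h1 : (1 : ℂ) ≠ ω := fun h => hω.ne_one (by norm_num) h.symm
  have h2 : (1 : ℂ) ≠ ω ^ 2 := fun h => hω.pow_ne_one_of_pos_of_lt (by norm_num) (by norm_num) h.symm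
  have h0 : ω ≠ 0 := hω.ne_zero (by norm_num)
  have h4 : ω ≠ ω ^ 2 := fun h => h1 (by
    have : ω * 1 = ω * ω := by rw [mul_one, ← sq]; exact h
    exact mul_left_cancel₀ h0 this)
  have key : ∀ t : ZMod p, f (χ (t * (1 - t))) =
      (if χ (t * (1 - t)) = 1 then f 1 else 0) + (if χ (t * (1 - t)) = ω then f ω else 0)
      + (if χ (t * (1 - t)) = ω ^ 2 then f (ω ^ 2) else 0) := by
    intro t
    by_cases hu : t * (1 - t) = 0
    · rw [hu, MulChar.map_zero, f0]
      simp [h0.symm, (pow_ne_zero 2 h0).symm]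
    · have := chi_pow χ h3 _ hu
      obtain ⟨i, hi, h⟩ := hω.eq_pow_of_pow_eq_one this
      rw [← h]
      interval_cases i
      · simp [h1, h2]
      · simp [h1.symm, h4]
      · simp [h2.symm, h4.symm]
  rw [Finset.sum_congr rfl (fun t _ => key t), Finset.sum_add_distrib, Finset.sum_add_distrib]
  simp only [cnt, ← Finset.sum_filter, Finset.sum_const, nsmul_eq_mul]

lemma cnt_total {p : ℕ} [Fact p.Prime] (χ : MulChar (ZMod p) ℂ) (h3 : orderOf χ = 3)
    (ω : ℂ) (hω : IsPrimitiveRoot ω 3) :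
    cnt χ 1 + cnt χ ω + cnt χ (ω ^ 2) + 2 = p := by
  have h := sum_f χ h3 ω hω (fun z => if z = 0 then 0 else 1) (by simp)
  have h0 : ω ≠ 0 := hω.ne_zero (by norm_num)
  have e : ∑ t : ZMod p, (if χ (t * (1 - t)) = 0 then (0:ℂ) else 1) =
      (p : ℂ) - 2 := by
    have : ∀ t : ZMod p, (if χ (t * (1 - t)) = 0 then (0:ℂ) else 1) =
        1 - (if t ∈ ({0, 1} : Finset (ZMod p)) then 1 else 0) := by
      intro t
      by_cases hu : t * (1 - t) = 0
      · rw [hu, MulChar.map_zero]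
        have : t = 0 ∨ t = 1 := by
          rcases mul_eq_zero.mp hu with h | h
          · exact Or.inl h
          · exact Or.inr (sub_eq_zero.mp h).symm
        simp [this]
      · have h1 : χ (t * (1 - t)) ≠ 0 := by
          intro h
          have := chi_pow χ h3 _ hu
          rw [h] at this
          norm_num at this
        have : ¬ (t = 0 ∨ t = 1) := by
          rintro (rfl | rfl) <;> simp at hu
        rw [if_neg h1]
        simp [this]
    rw [Finset.sum_congr rfl (fun t _ => this t), Finset.sum_sub_distrib]
    simp only [Finset.sum_ite_mem, Finset.univ_inter, Finset.sum_const]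
    rw [Finset.card_pair zero_ne_one]
    simp [ZMod.card]
  rw [e] at h
  simp [h0] at h
  have : ((cnt χ 1 + cnt χ ω + cnt χ (ω ^ 2) + 2 : ℕ) : ℂ) = (p : ℂ) := by
    push_cast; rw [← h]; ring
  exact_mod_cast this

lemma cnt_norm {p : ℕ} [Fact p.Prime] (χ : MulChar (ZMod p) ℂ) (h3 : orderOf χ = 3)
    (ω : ℂ) (hω : IsPrimitiveRoot ω 3) :
    ((cnt χ 1 : ℤ)) ^ 2 + (cnt χ ω : ℤ) ^ 2 + (cnt χ (ω ^ 2) : ℤ) ^ 2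
      - cnt χ 1 * cnt χ ω - cnt χ ω * cnt χ (ω ^ 2) - cnt χ 1 * cnt χ (ω ^ 2) = p := by
  have hne : χ ≠ 1 := by
    rintro rfl
    simp at h3
  have hp3 : χ ^ 3 = 1 := by rw [← h3]; exact pow_orderOf_eq_one χ
  have hinv : χ⁻¹ = χ ^ 2 := by
    rw [inv_eq_iff_mul_eq_one, ← pow_succ']; exact hp3
  have hne2 : χ * χ ≠ 1 := by
    rw [← sq]
    intro h
    have := orderOf_dvd_of_pow_eq_one h
    rw [h3] at this
    norm_num at this
  have hJ := jacobiSum_mul_jacobiSum_inv (F := ZMod p) (F' := ℂ) (by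
    rw [ringChar.eq_zero, ZMod.ringChar_zmod_n]; exact (Fact.out : p.Prime).ne_zero.symm) hne hne hne2
  have e1 : jacobiSum χ χ = ∑ t : ZMod p, id (χ (t * (1 - t))) := by
    simp [jacobiSum]
  have e2 : jacobiSum χ⁻¹ χ⁻¹ = ∑ t : ZMod p, (fun z : ℂ => z ^ 2) (χ (t * (1 - t))) := by
    rw [hinv]
    simp [jacobiSum, MulChar.pow_apply' χ two_ne_zero, mul_pow]
  rw [e1, e2, sum_f χ h3 ω hω id (by simp),
    sum_f χ h3 ω hω (fun z : ℂ => z ^ 2) (by simp), ZMod.card] at hJ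
  have hw : ω ^ 2 = - 1 - ω := by
    have := hω.geom_sum_eq_zero (by norm_num)
    simp [Finset.sum_range_succ] at this
    linear_combination this
  generalize cnt χ 1 = a at *
  generalize cnt χ ω = b at *
  generalize cnt χ (ω ^ 2) = c at *
  have : (((a : ℤ) ^ 2 + (b : ℤ) ^ 2 + (c : ℤ) ^ 2 - a * b - b * c - a * c : ℤ) : ℂ) = (p : ℤ) := by
    push_cast
    rw [← hJ]
    simp only [id]
    have h4 : (ω ^ 2) ^ 2 = ω := by
      have := hω.pow_eq_one
      linear_combination ω * this
    have h3 := hω.pow_eq_one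
    rw [h4]
    linear_combination (-(a:ℂ) * b - b * c  - a * c ) * hw + (-(b:ℂ)^2 - c^2-b*c*ω) * h3
  exact_mod_cast this

lemma cnt_quad {p : ℕ} [Fact p.Prime] (χ : MulChar (ZMod p) ℂ) (h3 : orderOf χ = 3)
    (z : ℂ) (hz : z ^ 3 = 1) :
    ∃ S : ℤ, (3 * (cnt χ z : ℤ) - p + 2) ^ 2 + 3 * S ^ 2 = 4 * p := by
  obtain ⟨ω, hω⟩ : ∃ ω : ℂ, IsPrimitiveRoot ω 3 := ⟨_, Complex.isPrimitiveRoot_exp 3 (by norm_num)⟩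
  have ht := cnt_total χ h3 ω hω
  have hn := cnt_norm χ h3 ω hω
  obtain ⟨i, hi, rfl⟩ := hω.eq_pow_of_pow_eq_one hz
  have ht' : (p : ℤ) = cnt χ 1 + cnt χ ω + cnt χ (ω ^ 2) + 2 := by exact_mod_cast ht.symm
  interval_cases i
  · refine ⟨cnt χ ω - cnt χ (ω ^ 2), ?_⟩
    rw [pow_zero, ← hn]
    rw [hn, ht'] 
    linear_combination 4 * hn + 4 * ht'
  · refine ⟨cnt χ 1 - cnt χ (ω ^ 2), ?_⟩
    rw [pow_one, ht']
    linear_combination 4 * hn + 4 * ht'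
  · refine ⟨cnt χ 1 - cnt χ ω, ?_⟩
    rw [ht']
    linear_combination 4 * hn + 4 * ht'

lemma cube_of_chi {p : ℕ} [Fact p.Prime] (χ : MulChar (ZMod p) ℂ) (h3 : orderOf χ = 3)
    (a : ZMod p) (ha : χ a = 1) : ∃ x : ZMod p, x ^ 3 = a := by
  have ha0 : a ≠ 0 := by
    rintro rfl
    rw [MulChar.map_zero] at ha
    exact zero_ne_one ha
  obtain ⟨g, hg⟩ := IsCyclic.exists_generator (α := (ZMod p)ˣ)
  have hg1 : χ g ≠ 1 := by
    intro h
    have : χ = 1 := by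
      rw [MulChar.eq_iff hg]
      simpa using h
    rw [this] at h3
    simp at h3
  have hg3 : χ g ^ 3 = 1 := chi_pow χ h3 _ g.ne_zero
  obtain ⟨k, hk⟩ := (mem_powers_iff_mem_zpowers).mpr (hg (Units.mk0 a ha0))
  have hk' : (g : ZMod p) ^ k = a := by
    have := congrArg Units.val hk
    simpa using this
  have h1 : χ g ^ k = 1 := by rw [← map_pow, hk', ha]
  have ho : orderOf (χ g) = 3 := orderOf_eq_prime hg3 hg1
  obtain ⟨m, rfl⟩ := ho ▸ orderOf_dvd_of_pow_eq_one h1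
  exact ⟨(g : ZMod p) ^ m, by rw [← pow_mul, mul_comm, hk']⟩

lemma chi_neg_one {p : ℕ} [Fact p.Prime] (χ : MulChar (ZMod p) ℂ) (h3 : orderOf χ = 3): χ (-1) = 1 := by
  have h := chi_pow χ h3 (-1) (by simp)
  rw [← map_pow] at h
  rwa [show (-1 : ZMod p) ^ 3 = -1 by ring] at h

lemma cnt_mod_two {p : ℕ} [Fact p.Prime] (χ : MulChar (ZMod p) ℂ) (h3 : orderOf χ = 3)
    (hp2 : (2 : ZMod p) ≠ 0) (z : ℂ) :
    cnt χ z % 2 = if z = χ 2 then 1 else 0 := by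
  have h := aux_card_mod ((Finset.univ : Finset (ZMod p)).filter (fun t => χ (t * (1 - t)) = z))
    (fun t => 1 - t) 2 (by
      intro x hx
      simp only [Finset.mem_filter, Finset.mem_univ, true_and] at hx ⊢
      rw [← hx]; congr 1; ring) (by intro x hx; simp)
  have hh : χ (2⁻¹ * (1 - 2⁻¹)) = χ 2 := by
    have e : (2⁻¹ * (1 - 2⁻¹) : ZMod p) = 2 * (2⁻¹) ^ 3 := by
      field_simp; ring
    rw [e, map_mul, map_pow, chi_pow χ h3 _ (inv_ne_zero hp2), mul_one]
  have hfix : ∀ t : ZMod p, 1 - t = t ↔ t = 2⁻¹ := by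
    intro t
    constructor
    · intro h
      apply eq_inv_of_mul_eq_one_left
      linear_combination -h
    · rintro rfl
      field_simp
      ring
  have hc : ((((Finset.univ : Finset (ZMod p)).filter (fun t => χ (t * (1 - t)) = z))).filter
      (fun t => 1 - t = t)).card = if z = χ 2 then 1 else 0 := by
    rw [Finset.filter_filter]
    split_ifs with hz
    · rw [Finset.card_eq_one]
      refine ⟨2⁻¹, ?_⟩
      ext t
      simp only [Finset.mem_filter, Finset.mem_univ, true_and, Finset.mem_singleton, hfix]
      constructor
      · exact fun h => h.2
      · rintro rfl
        exact ⟨by rw [hh, hz], rfl⟩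
    · rw [Finset.card_eq_zero, Finset.filter_eq_empty_iff]
      rintro t - ⟨h1, h2⟩
      rw [hfix] at h2
      rw [h2, hh] at h1
      exact hz h1.symm
  rw [hc] at h
  have h' : cnt χ z % 2 = (if z = χ 2 then 1 else 0) % 2 := h
  rw [h']
  split_ifs <;> rfl

lemma cnt_mod_three {p : ℕ} [Fact p.Prime] (χ : MulChar (ZMod p) ℂ) (h3 : orderOf χ = 3)
    (ρ : ZMod p) (hρ : ρ ^ 2 + ρ + 1 = 0) (hp3 : (3 : ZMod p) ≠ 0)
    (z : ℂ) (hz : z ≠ 0) :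
    cnt χ z % 3 = if z = 1 then 2 else 0 := by
  have hnz : ∀ x : ZMod p, χ (x * (1 - x)) = z → x ≠ 0 ∧ 1 - x ≠ 0 := by
    intro x hx
    constructor
    · rintro rfl
      simp only [zero_mul, MulChar.map_zero] at hx
      exact hz hx.symm
    · intro h
      rw [h] at hx
      simp only [mul_zero, MulChar.map_zero] at hx
      exact hz hx.symm
  have h := aux_card_mod ((Finset.univ : Finset (ZMod p)).filter (fun t => χ (t * (1 - t)) = z))
    (fun t => (1 - t)⁻¹) 3 (by
      intro x hx
      simp only [Finset.mem_filter, Finset.mem_univ, true_and] at hx ⊢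
      obtain ⟨h1, h2⟩ := hnz x hx
      have e : (1 - x)⁻¹ * (1 - (1 - x)⁻¹) = (-1) * (x * (1 - x)) * ((1 - x)⁻¹) ^ 3 := by
        field_simp; ring
      rw [e, map_mul, map_pow, chi_pow χ h3 _ (inv_ne_zero h2), mul_one, map_mul,
        chi_neg_one χ h3, one_mul, hx]) (by
      intro x hx
      simp only [Finset.mem_filter, Finset.mem_univ, true_and] at hx ⊢
      obtain ⟨h1, h2⟩ := hnz x hx
      simp only [Function.iterate_succ, Function.iterate_zero, Function.comp, id]
      have e : 1 - (1 - x)⁻¹ = - x * (1 - x)⁻¹ := by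
        field_simp; ring
      rw [e]
      field_simp
      ring)
  have hfix : ∀ t : ZMod p, χ (t * (1 - t)) = z → ((1 - t)⁻¹ = t ↔ t * (1 - t) = 1) := by
    intro t ht
    obtain ⟨h1, h2⟩ := hnz t ht
    constructor
    · intro h
      nth_rewrite 1 [← h]
      exact inv_mul_cancel₀ h2
    · intro h
      exact (eq_inv_of_mul_eq_one_left h).symm
  have hc : ((((Finset.univ : Finset (ZMod p)).filter (fun t => χ (t * (1 - t)) = z))).filter
      (fun t => (1 - t)⁻¹ = t)).card = if z = 1 then 2 else 0 := by
    rw [Finset.filter_filter]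
    split_ifs with hz
    · rw [Finset.card_eq_two]
      refine ⟨-ρ, 1 + ρ, ?_, ?_⟩
      · intro h
        apply hp3
        have h1 : 2 * ρ = - 1 := by linear_combination -h
        linear_combination 4 * hρ - (2 * ρ + 1) * h1 
      ext t
      simp only [Finset.mem_filter, Finset.mem_univ, true_and, Finset.mem_insert, Finset.mem_singleton]
      constructor
      · rintro ⟨h1, h2⟩
        rw [hfix t h1] at h2
        have : (t + ρ) * (t - (1 + ρ)) = 0 := by linear_combination -h2 - hρ
        rcases mul_eq_zero.mp this with h | h
        · left; linear_combination h
        · right; linear_combination h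
      · intro h
        have h1 : t * (1 - t) = 1 := by
          rcases h with rfl | rfl <;> linear_combination -hρ
        have h2 : χ (t * (1 - t)) = z := by rw [h1, hz, map_one]
        exact ⟨h2, (hfix t h2).mpr h1⟩
    · rw [Finset.card_eq_zero, Finset.filter_eq_empty_iff]
      rintro t - ⟨h1, h2⟩
      rw [hfix t h1] at h2
      rw [h2, map_one] at h1
      exact hz h1.symm
  rw [hc] at h
  have h' : cnt χ z % 3 = (if z = 1 then 2 else 0) % 3 := h
  rw [h']
  split_ifs <;> rfl

lemma card_pairs {p : ℕ} [Fact p.Prime] (χ : MulChar (ZMod p) ℂ) (h3 : orderOf χ = 3)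
    (ρ : ZMod p) (hρ : ρ ^ 2 + ρ + 1 = 0) (hp3 : (3 : ZMod p) ≠ 0)
    (D : ZMod p) (hD : D ≠ 0) :
    ((Finset.univ : Finset (ZMod p × ZMod p)).filter
      (fun q => q.1 * q.2 * (q.1 + q.2) = D)).card = 3 * cnt χ (χ D) := by
  have hρ1 : ρ ≠ 1 := by
    rintro rfl; apply hp3; linear_combination hρ
  have hρ3 : ρ ^ 3 = 1 := by linear_combination (ρ - 1) * hρ
  have hρ0 : ρ ≠ 0 := by rintro rfl; simp at hρ
  rw [Finset.card_eq_sum_card_fiberwise (f := fun q : ZMod p × ZMod p => - q.2 / q.1)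
    (t := (Finset.univ : Finset (ZMod p)).filter (fun t => χ (t * (1 - t)) = χ D))]
  · rw [Finset.sum_const_nat (m := 3), mul_comm]; · rfl
    intro t ht
    simp only [Finset.mem_filter, Finset.mem_univ, true_and] at ht
    have hchiD : χ D ≠ 0 := by
      intro h
      have := chi_pow χ h3 D hD
      rw [h] at this; norm_num at this
    have ht0 : t * (1 - t) ≠ 0 := by
      intro h
      rw [h, MulChar.map_zero] at ht
      exact hchiD ht.symm
    obtain ⟨x, hx⟩ := cube_of_chi χ h3 (-1 * (D * (t * (1 - t))⁻¹)) (by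
      rw [map_mul, chi_neg_one χ h3, one_mul, map_mul, ← ht, ← map_mul, mul_inv_cancel₀ ht0, map_one])
    have hx' : x ^ 3 * (t * (1 - t)) = - D := by
      rw [hx, mul_assoc, mul_assoc, inv_mul_cancel₀ ht0]; ring
    have hx0 : x ≠ 0 := by
      rintro rfl
      apply hD; linear_combination hx'
    rw [Finset.filter_filter, Finset.card_eq_three]
    refine ⟨(x, -t * x), (ρ * x, -t * (ρ * x)), (ρ ^ 2 * x, -t * (ρ ^ 2 * x)), ?_, ?_, ?_, ?_⟩
    · intro h
      have := (Prod.ext_iff.mp h).1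
      simp only at this
      exact hρ1 (mul_right_cancel₀ hx0 (by rw [one_mul, ← this]))
    · intro h
      have := (Prod.ext_iff.mp h).1
      simp only at this
      have h2 : ρ ^ 2 = 1 := (mul_right_cancel₀ hx0 (by rw [one_mul, ← this]))
      apply hρ1; linear_combination hρ3 - ρ * h2
    · intro h
      have := (Prod.ext_iff.mp h).1
      simp only at this
      have h2 : ρ = ρ ^ 2 := (mul_right_cancel₀ hx0 this)
      apply hρ1
      apply mul_left_cancel₀ hρ0; rw [mul_one, ← sq, ← h2]
    · ext ⟨u, v⟩
      simp only [Finset.mem_filter, Finset.mem_univ, true_and, Finset.mem_insert,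
        Finset.mem_singleton, Prod.mk.injEq]
      constructor
      · rintro ⟨h1, h2⟩
        have hu : u ≠ 0 := by
          rintro rfl; apply hD; rw [← h1]; ring
        rw [div_eq_iff hu] at h2
        have hv : v = - t * u := by linear_combination -h2
        have h5 : (t * (1 - t)) * ((u - x) * ((u - ρ * x) * (u - ρ ^ 2 * x))) = 0 := by
          rw [hv] at h1
          have : (u - x) * ((u - ρ * x) * (u - ρ ^ 2 * x)) = u ^ 3 - x ^ 3 := by
            linear_combination (-u^2*x + ρ * u*x^2) * hρ - x ^ 3 * hρ3
          rw [this]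
          linear_combination -h1 - hx'
        rcases mul_eq_zero.mp ((mul_eq_zero.mp h5).resolve_left ht0) with h | h
        · left; have := sub_eq_zero.mp h; exact ⟨this, by rw [hv, this]⟩
        rcases mul_eq_zero.mp h with h | h
        · right; left; have := sub_eq_zero.mp h; exact ⟨this, by rw [hv, this]⟩
        · right; right; have := sub_eq_zero.mp h; exact ⟨this, by rw [hv, this]⟩
      · rintro (⟨rfl, rfl⟩ | ⟨rfl, rfl⟩ | ⟨rfl, rfl⟩)
        · refine ⟨by linear_combination -hx', ?_⟩
          field_simp
        · refine ⟨by linear_combination -hx' - x^3 * (t*(1-t)) * hρ3, ?_⟩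
          field_simp
        · refine ⟨by linear_combination -hx' - x^3 * (t*(1-t)) * (ρ^3+1) * hρ3, ?_⟩
          field_simp
  · rintro ⟨u, v⟩ h
    simp only [Finset.coe_filter, Finset.mem_univ, true_and, Set.mem_ofPred_eq] at h ⊢
    have hu : u ≠ 0 := by
      rintro rfl; apply hD; rw [← h]; ring
    have : -v / u * (1 - -v / u) = -1 * D * (u⁻¹) ^ 3 := by
      rw [← h]; field_simp; ring
    rw [this, map_mul, map_pow, chi_pow χ h3 _ (inv_ne_zero hu), mul_one, map_mul,
      chi_neg_one χ h3, one_mul]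

lemma V_formula {p : ℕ} [Fact p.Prime] (hp2 : (2 : ZMod p) ≠ 0) (hp3 : (3 : ZMod p) ≠ 0) :
    3 * ((Finset.univ : Finset (ZMod p)).filter
        (fun b => ∃ x : ZMod p, x ≠ 0 ∧ x ^ 3 + 4 = b * x)).card +
      ((Finset.univ : Finset (ZMod p × ZMod p)).filter
        (fun q => q.1 * q.2 * (q.1 + q.2) = 4)).card = 3 * (p - 1) := by
  classical
  have hp4 : (4 : ZMod p) ≠ 0 := by
    have : (4 : ZMod p) = 2 * 2 := by norm_num
    rw [this]; exact mul_ne_zero hp2 hp2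
  set W := (Finset.univ : Finset (ZMod p)).filter
        (fun b => ∃ x : ZMod p, x ≠ 0 ∧ x ^ 3 + 4 = b * x) with hW
  set s := (Finset.univ : Finset (ZMod p)).filter (fun x => x ≠ 0) with hs
  have hsc : s.card = p - 1 := by
    rw [hs, Finset.filter_ne', Finset.card_erase_of_mem (Finset.mem_univ _), Finset.card_univ, ZMod.card]
  have hφ : ∀ x b : ZMod p, x ≠ 0 → ((x ^ 3 + 4) / x = b ↔ x ^ 3 + 4 = b * x) := by
    intro x b hx
    rw [div_eq_iff hx]
  rw [← hsc]
  rw [Finset.card_eq_sum_card_fiberwise (s := s) (f := fun x => (x ^ 3 + 4) / x) (t := W) (by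
    intro x hx
    simp only [hs, hW, Finset.coe_filter, Finset.mem_univ, true_and, Set.mem_ofPred_eq] at hx ⊢
    exact ⟨x, hx, by field_simp⟩)]
  rw [Finset.card_eq_sum_card_fiberwise (f := fun q : ZMod p × ZMod p => (q.1 ^ 3 + 4) / q.1)
    (t := W) (by
    rintro ⟨x, y⟩ hx
    simp only [hW, Finset.coe_filter, Finset.mem_univ, true_and, Set.mem_ofPred_eq] at hx ⊢
    have : x ≠ 0 := by
      rintro rfl; apply hp4; rw [← hx]; ring
    exact ⟨x, this, by field_simp⟩)]
  rw [mul_comm 3 W.card, ← smul_eq_mul, ← Finset.sum_const, ← Finset.sum_add_distrib,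
    Finset.mul_sum]
  apply Finset.sum_congr rfl
  intro b hb
  simp only [hs, Finset.filter_filter]
  -- fibres as explicit conditions
  have e1 : (Finset.univ : Finset (ZMod p)).filter (fun a => a ≠ 0 ∧ (a ^ 3 + 4) / a = b) =
      (Finset.univ : Finset (ZMod p)).filter (fun a => a ^ 3 + 4 = b * a) := by
    apply Finset.filter_congr
    intro a _
    constructor
    · rintro ⟨h1, h2⟩; exact (hφ a b h1).mp h2
    · intro h
      have : a ≠ 0 := by
        rintro rfl; apply hp4; linear_combination h
      exact ⟨this, (hφ a b this).mpr h⟩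
  have e2 : (Finset.univ : Finset (ZMod p × ZMod p)).filter
      (fun a => a.1 * a.2 * (a.1 + a.2) = 4 ∧ (a.1 ^ 3 + 4) / a.1 = b) =
      (Finset.univ : Finset (ZMod p × ZMod p)).filter
      (fun a => a.1 * a.2 * (a.1 + a.2) = 4 ∧ a.1 ^ 3 + 4 = b * a.1) := by
    apply Finset.filter_congr
    rintro ⟨x, y⟩ _
    apply and_congr_right
    intro h
    have : x ≠ 0 := by
      rintro rfl; apply hp4; rw [← h]; ring
    exact hφ x b this
  rw [e1, e2]
  -- double root case
  have dbl : ∀ d : ZMod p, d ^ 3 = 2 → b = 3 * d ^ 2 →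
      3 + ((Finset.univ : Finset (ZMod p × ZMod p)).filter
      (fun a => a.1 * a.2 * (a.1 + a.2) = 4 ∧ a.1 ^ 3 + 4 = b * a.1)).card =
      3 * ((Finset.univ : Finset (ZMod p)).filter (fun a => a ^ 3 + 4 = b * a)).card := by
    intro d hd hbd
    have hd0 : d ≠ 0 := by rintro rfl; apply hp2; rw [← hd]; ring
    have hne : d ≠ -2 * d := by
      intro h
      have : (3 : ZMod p) * d = 0 := by linear_combination h
      exact (mul_ne_zero hp3 hd0) this
    have hroot : ∀ u : ZMod p, u ^ 3 + 4 = b * u ↔ u = d ∨ u = -2 * d := by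
      intro u
      constructor
      · intro h
        have : (u - d) * ((u - d) * (u + 2 * d)) = 0 := by
          rw [hbd] at h
          linear_combination h + 2 * hd
        rcases mul_eq_zero.mp this with h | h
        · left; exact sub_eq_zero.mp h
        rcases mul_eq_zero.mp h with h | h
        · left; exact sub_eq_zero.mp h
        · right; linear_combination h
      · rintro (rfl | rfl)
        · rw [hbd]; linear_combination -2 * hd
        · rw [hbd]; linear_combination -2 * hd
    have c1 : ((Finset.univ : Finset (ZMod p)).filter (fun a => a ^ 3 + 4 = b * a)).card = 2 := by
      rw [Finset.card_eq_two]
      refine ⟨d, -2 * d, hne, ?_⟩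
      ext u
      simp [hroot]
    have c2 : ((Finset.univ : Finset (ZMod p × ZMod p)).filter
      (fun a => a.1 * a.2 * (a.1 + a.2) = 4 ∧ a.1 ^ 3 + 4 = b * a.1)).card = 3 := by
      rw [Finset.card_eq_three]
      refine ⟨(d, d), (d, -2 * d), (-2 * d, d), ?_, ?_, ?_, ?_⟩
      · intro h; exact hne (Prod.ext_iff.mp h).2
      · intro h; exact hne (Prod.ext_iff.mp h).1
      · intro h; exact hne (Prod.ext_iff.mp h).1
      · ext ⟨u, v⟩
        simp only [Finset.mem_filter, Finset.mem_univ, true_and, Finset.mem_insert,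
          Finset.mem_singleton, Prod.mk.injEq, hroot]
        constructor
        · rintro ⟨h1, rfl | rfl⟩
          · have : u * ((v - u) * (v + 2 * u)) = 0 := by linear_combination h1 - 2 * hd
            rcases mul_eq_zero.mp ((mul_eq_zero.mp this).resolve_left hd0) with h | h
            · left; exact ⟨rfl, sub_eq_zero.mp h⟩
            · right; left; exact ⟨rfl, by linear_combination h⟩
          · have : (-2 * d) * ((v - d) * (v - d)) = 0 := by linear_combination h1 - 2 * hd
            rcases mul_eq_zero.mp this with h | h
            · exact absurd h (mul_ne_zero (neg_ne_zero.mpr hp2) hd0)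
            · right; right; exact ⟨rfl, sub_eq_zero.mp (mul_self_eq_zero.mp h)⟩
        · rintro (⟨rfl, rfl⟩ | ⟨rfl, rfl⟩ | ⟨rfl, rfl⟩)
          · exact ⟨by linear_combination 2 * hd, Or.inl rfl⟩
          · exact ⟨by linear_combination 2 * hd, Or.inl rfl⟩
          · exact ⟨by linear_combination 2 * hd, Or.inr rfl⟩
    rw [c1, c2]
  by_cases hex : ∃ x y : ZMod p, x * y * (x + y) = 4 ∧ x ^ 3 + 4 = b * x
  · obtain ⟨x, y, hxy, hx⟩ := hex
    have hx0 : x ≠ 0 := by rintro rfl; apply hp4; rw [← hxy]; ring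
    have hy0 : y ≠ 0 := by rintro rfl; apply hp4; rw [← hxy]; ring
    have hz0 : -(x + y) ≠ 0 := by intro h; apply hp4; rw [← hxy]; linear_combination (-x * y) * h
    have hbb : b = x ^ 2 + x * y + y ^ 2 := by
      apply mul_right_cancel₀ hx0
      linear_combination -hx - hxy
    by_cases h1 : x = y
    · subst h1
      exact dbl x (mul_left_cancel₀ hp2 (by linear_combination hxy)) (by rw [hbb]; ring)
    by_cases h2 : x = -(x + y)
    · have hy : y = -2 * x := by linear_combination h2
      subst hy
      exact dbl x (mul_left_cancel₀ hp2 (by linear_combination hxy)) (by rw [hbb]; ring)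
    by_cases h4 : y = -(x + y)
    · have hy : x = -2 * y := by linear_combination h4
      subst hy
      exact dbl y (mul_left_cancel₀ hp2 (by linear_combination hxy)) (by rw [hbb]; ring)
    obtain ⟨z, hz⟩ : ∃ z, z = -(x + y) := ⟨_, rfl⟩
    rw [← hz] at h2 h4 hz0
    have hxyz : x * y * z = -4 := by rw [hz]; linear_combination -hxy
    have hroot : ∀ u : ZMod p, u ^ 3 + 4 = b * u ↔ u = x ∨ u = y ∨ u = z := by
      intro u
      have hid : u ^ 3 + 4 - b * u = (u - x) * ((u - y) * (u - z)) := by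
        rw [hbb, hz]; linear_combination -hxy
      rw [← sub_eq_zero, hid, mul_eq_zero, mul_eq_zero, sub_eq_zero, sub_eq_zero, sub_eq_zero]
    have c1 : ((Finset.univ : Finset (ZMod p)).filter (fun a => a ^ 3 + 4 = b * a)).card = 3 := by
      rw [Finset.card_eq_three]
      refine ⟨x, y, z, h1, h2, h4, ?_⟩
      ext u
      simp [hroot]
    have c2 : (Finset.univ : Finset (ZMod p × ZMod p)).filter
      (fun a => a.1 * a.2 * (a.1 + a.2) = 4 ∧ a.1 ^ 3 + 4 = b * a.1) =
        {(x, y), (y, x), (x, z), (z, x), (y, z), (z, y)} := by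
      ext ⟨u, v⟩
      simp only [Finset.mem_filter, Finset.mem_univ, true_and, Finset.mem_insert,
        Finset.mem_singleton, Prod.mk.injEq, hroot]
      constructor
      · rintro ⟨g1, rfl | rfl | rfl⟩
        · have : u * ((v - y) * (v - z)) = 0 := by rw [hz]; linear_combination g1 - hxy
          rcases mul_eq_zero.mp ((mul_eq_zero.mp this).resolve_left hx0) with h | h
          · have := sub_eq_zero.mp h; tauto
          · have := sub_eq_zero.mp h; tauto
        · have : u * ((v - x) * (v - z)) = 0 := by rw [hz]; linear_combination g1 - hxy
          rcases mul_eq_zero.mp ((mul_eq_zero.mp this).resolve_left hy0) with h | h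
          · have := sub_eq_zero.mp h; tauto
          · have := sub_eq_zero.mp h; tauto
        · have : u * ((v - x) * (v - y)) = 0 := by
            rw [hz] at g1 ⊢; linear_combination g1 - hxy
          rcases mul_eq_zero.mp ((mul_eq_zero.mp this).resolve_left hz0) with h | h
          · have := sub_eq_zero.mp h; tauto
          · have := sub_eq_zero.mp h; tauto
      · rintro (⟨rfl, rfl⟩ | ⟨rfl, rfl⟩ | ⟨rfl, rfl⟩ | ⟨rfl, rfl⟩ | ⟨rfl, rfl⟩ | ⟨rfl, rfl⟩)
        · exact ⟨by linear_combination hxy, by tauto⟩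
        · exact ⟨by linear_combination hxy, by tauto⟩
        · exact ⟨by rw [hz]; linear_combination hxy, by tauto⟩
        · exact ⟨by rw [hz]; linear_combination hxy, by tauto⟩
        · exact ⟨by rw [hz]; linear_combination hxy, by tauto⟩
        · exact ⟨by rw [hz]; linear_combination hxy, by tauto⟩
    rw [c1, c2]
    rw [Finset.card_insert_of_notMem, Finset.card_insert_of_notMem, Finset.card_insert_of_notMem,
      Finset.card_insert_of_notMem, Finset.card_insert_of_notMem, Finset.card_singleton]
    all_goals simp [h1, h2, h4, Ne.symm h1, Ne.symm h2, Ne.symm h4]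
  · push Not at hex
    have c2 : ((Finset.univ : Finset (ZMod p × ZMod p)).filter
      (fun a => a.1 * a.2 * (a.1 + a.2) = 4 ∧ a.1 ^ 3 + 4 = b * a.1)).card = 0 := by
      rw [Finset.card_eq_zero, Finset.filter_eq_empty_iff]
      rintro ⟨x, y⟩ - ⟨h1, h2⟩
      exact hex x y h1 h2
    rw [hW, Finset.mem_filter] at hb
    obtain ⟨-, x, hx0, hx⟩ := hb
    have c1 : ((Finset.univ : Finset (ZMod p)).filter (fun a => a ^ 3 + 4 = b * a)).card = 1 := by
      rw [Finset.card_eq_one]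
      refine ⟨x, ?_⟩
      ext u
      simp only [Finset.mem_filter, Finset.mem_univ, true_and, Finset.mem_singleton]
      constructor
      · intro hu
        by_contra hne
        apply hex x u _ hx
        have : (u - x) * (x * u * (x + u) - 4) = 0 := by linear_combination x * hu - u * hx
        exact sub_eq_zero.mp ((mul_eq_zero.mp this).resolve_left (sub_ne_zero.mpr hne))
      · rintro rfl; exact hx
    rw [c1, c2, add_zero, mul_one]

lemma quad_unique (p : ℕ) (hp : p.Prime) (A B T S : ℤ) (hAB : (p : ℤ) = A ^ 2 + 3 * B ^ 2)
    (hTS : T ^ 2 + 3 * S ^ 2 = 4 * p) :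
    T = 2 * A ∨ T = -2 * A ∨ T = A + 3 * B ∨ T = A - 3 * B ∨ T = -A + 3 * B ∨ T = -A - 3 * B := by
  have hpp : Prime (p : ℤ) := Nat.prime_iff_prime_int.mp hp
  have hpos : (0 : ℤ) < p := by exact_mod_cast hp.pos
  have main : ∀ S : ℤ, T ^ 2 + 3 * S ^ 2 = 4 * p → (p : ℤ) ∣ T * B - S * A →
      T = 2 * A ∨ T = -2 * A ∨ T = A + 3 * B ∨ T = A - 3 * B ∨ T = -A + 3 * B ∨ T = -A - 3 * B := by
    intro S hTS ⟨m, hm⟩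
    have e : (T * A + 3 * S * B) ^ 2 + 3 * (T * B - S * A) ^ 2 = 4 * p ^ 2 := by
      linear_combination (A ^ 2 + 3 * B ^ 2) * hTS - 4 * p * hAB
    have hd : (p : ℤ) ∣ T * A + 3 * S * B := by
      apply hpp.dvd_of_dvd_pow (n := 2)
      refine ⟨4 * p - 3 * p * m ^ 2, ?_⟩
      rw [hm] at e
      linear_combination e
    obtain ⟨n, hn⟩ := hd
    rw [hm, hn] at e
    have e2 : n ^ 2 + 3 * m ^ 2 = 4 := by
      apply mul_left_cancel₀ (pow_ne_zero 2 hpos.ne')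
      linear_combination e
    have eT : T = n * A + 3 * m * B := by
      apply mul_left_cancel₀ hpos.ne'
      linear_combination A * hn + 3 * B * hm + T * hAB
    have hm1 : m ≤ 1 := by nlinarith
    have hm2 : -1 ≤ m := by nlinarith
    have hn1 : n ≤ 2 := by nlinarith
    have hn2 : -2 ≤ n := by nlinarith
    subst eT
    interval_cases m <;> interval_cases n <;> simp at e2 <;> omega
  have hprod : (p : ℤ) ∣ (T * B - S * A) * (T * B - (-S) * A) := by
    refine ⟨4 * B ^ 2 - S ^ 2, ?_⟩
    linear_combination B ^ 2 * hTS + S ^ 2 * hAB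
  rcases hpp.dvd_or_dvd hprod with h | h
  · exact main S hTS h
  · exact main (-S) (by rw [← hTS]; ring) h

lemma arith_final (p A B n T1n : ℤ) (hAB : p = A ^ 2 + 3 * B ^ 2) (hA : A % 3 = 1)
    (hodd : p % 2 = 1) (c : Prop)
    (h1 : ∃ T, T = 3 * n - p + 2 ∧ (T = 2 * A ∨ T = -2 * A ∨ T = A + 3 * B ∨ T = A - 3 * B ∨
      T = -A + 3 * B ∨ T = -A - 3 * B))
    (h2 : ∃ T, T = 3 * T1n - p + 2 ∧ (T = 2 * A ∨ T = -2 * A ∨ T = A + 3 * B ∨ T = A - 3 * B ∨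
      T = -A + 3 * B ∨ T = -A - 3 * B))
    (hc : c → n % 2 = 1 ∧ n % 3 = 2)
    (hnc : ¬ c → n % 2 = 0 ∧ n % 3 = 0 ∧ T1n % 2 = 0 ∧ T1n % 3 = 2) :
    (3 ∣ B → 3 * n - p + 2 = -2 * A) ∧
    (¬ 3 ∣ B → 3 * n - p + 2 = A - 3 * legendreSym 3 B * B) := by
  obtain ⟨T, hT, hT'⟩ := h1
  obtain ⟨U, hU, hU'⟩ := h2
  obtain ⟨k, rfl⟩ : ∃ k, A = 3 * k + 1 := ⟨A / 3, by omega⟩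
  obtain ⟨l, r, rfl, hr0, hr3⟩ : ∃ l r, B = 3 * l + r ∧ 0 ≤ r ∧ r < 3 :=
    ⟨B / 3, B % 3, by omega, by omega, by omega⟩
  have hpar : ((3 * k + 1) + (3 * l + r)) % 2 = 1 := by
    rcases Int.emod_two_eq_zero_or_one ((3 * k + 1) + (3 * l + r)) with h | h
    · exfalso
      obtain ⟨j, hj⟩ : ∃ j, 3 * l + r = 2 * j - (3 * k + 1) :=
        ⟨((3 * k + 1) + (3 * l + r)) / 2, by omega⟩
      rw [hj] at hAB
      have : p = 2 * (2 * (3 * k + 1) ^ 2 + 6 * j ^ 2 - 6 * j * (3 * k + 1)) := by rw [hAB]; ring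
      omega
    · exact h
  have hleg : r = 0 ∨ (r = 1 ∧ legendreSym 3 (3 * l + r) = 1) ∨
      (r = 2 ∧ legendreSym 3 (3 * l + r) = -1) := by
    rw [legendreSym.mod]
    have : (3 * l + r) % ((3 : ℕ) : ℤ) = r := by push_cast; omega
    rw [this]
    interval_cases r
    · left; rfl
    · right; left; exact ⟨rfl, by decide⟩
    · right; right; exact ⟨rfl, by decide⟩
  generalize hG : legendreSym 3 (3 * l + r) = G at *
  have hp9 : p = 9 * (k ^ 2 + 3 * l ^ 2 + 2 * l * r) + 6 * k + 1 + 3 * (r * r) := by rw [hAB]; ring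
  generalize k ^ 2 + 3 * l ^ 2 + 2 * l * r = Q at hp9
  clear hAB
  rcases hleg with rfl | ⟨rfl, rfl⟩ | ⟨rfl, rfl⟩ <;> by_cases hcc : c
  · have := hc hcc
    clear hU hU'
    refine ⟨fun _ => ?_, fun h => by omega⟩
    rcases hT' with h | h | h | h | h | h <;> omega
  · exfalso
    have := hnc hcc
    clear hT hT'
    rcases hU' with h | h | h | h | h | h <;> omega
  · exfalso
    have := hc hcc
    clear hU hU'
    rcases hT' with h | h | h | h | h | h <;> omega
  · have := hnc hcc
    clear hU hU'
    refine ⟨fun _ => by omega, fun _ => ?_⟩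
    rcases hT' with h | h | h | h | h | h <;> omega
  · exfalso
    have := hc hcc
    clear hU hU'
    rcases hT' with h | h | h | h | h | h <;> omega
  · have := hnc hcc
    clear hU hU'
    refine ⟨fun _ => by omega, fun _ => ?_⟩
    rcases hT' with h | h | h | h | h | h <;> omega

lemma range_card {p : ℕ} [Fact p.Prime] (P : ℕ → Prop) [DecidablePred P] (Q : ZMod p → Prop)
    [DecidablePred Q] (h : ∀ b : ℕ, P b ↔ Q (b : ZMod p)) :
    ((Finset.range p).filter P).card = ((Finset.univ : Finset (ZMod p)).filter Q).card := by
  refine Finset.card_nbij' (fun b => (b : ZMod p)) (fun b => b.val) ?_ ?_ ?_ ?_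
  · intro b hb
    have hb := Finset.mem_filter.mp hb
    exact Finset.mem_coe.mpr (Finset.mem_filter.mpr ⟨Finset.mem_univ _, (h b).mp hb.2⟩)
  · intro b hb
    have hb := Finset.mem_filter.mp hb
    refine Finset.mem_coe.mpr (Finset.mem_filter.mpr
      ⟨Finset.mem_range.mpr (ZMod.val_lt b), (h _).mpr ?_⟩)
    rw [ZMod.natCast_zmod_val]; exact hb.2
  · intro b hb
    have hb := Finset.mem_filter.mp hb
    exact ZMod.val_cast_of_lt (Finset.mem_range.mp hb.1)
  · intro b hb
    exact ZMod.natCast_zmod_val b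

lemma exists_transfer {p : ℕ} [Fact p.Prime] (P : ℕ → Prop) (Q : ZMod p → Prop)
    (h : ∀ x : ℕ, P x ↔ Q (x : ZMod p)) :
    (∃ x ∈ Finset.Icc 1 (p - 1), P x) ↔ ∃ x : ZMod p, x ≠ 0 ∧ Q x := by
  have hp0 : 0 < p := (Fact.out : p.Prime).pos
  constructor
  · rintro ⟨x, hx, hP⟩
    rw [Finset.mem_Icc] at hx
    refine ⟨x, ?_, (h x).mp hP⟩
    intro h0
    rw [ZMod.natCast_eq_zero_iff] at h0
    have := Nat.le_of_dvd (by omega) h0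
    omega
  · rintro ⟨x, hx, hQ⟩
    refine ⟨x.val, ?_, (h _).mpr (by rwa [ZMod.natCast_zmod_val])⟩
    have h1 := ZMod.val_lt x
    have h2 : x.val ≠ 0 := fun h => hx ((ZMod.val_eq_zero x).mp h)
    rw [Finset.mem_Icc]; omega

lemma V_first {p : ℕ} [Fact p.Prime] :
    ((Finset.range p).filter (fun b : ℕ =>
      ∃ x ∈ Finset.Icc 1 (p - 1),
        (x : ℤ) ^ 3 + (4) ≡ (b : ℤ) * (x : ℤ) [ZMOD (p : ℤ)])).card =
    ((Finset.univ : Finset (ZMod p)).filter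
        (fun b => ∃ x : ZMod p, x ≠ 0 ∧ x ^ 3 + 4 = b * x)).card := by
  apply range_card
  intro b
  apply exists_transfer
  intro x
  rw [← ZMod.intCast_eq_intCast_iff]
  push_cast
  rfl

lemma V_second {p : ℕ} [Fact p.Prime] (hp2 : (2 : ZMod p) ≠ 0) :
    ((Finset.range p).filter (fun b : ℕ =>
      ∃ x ∈ Finset.Icc 1 (p - 1),
        (x : ℤ) ^ 3 + (2) ≡ (b : ℤ) * (x : ℤ) ^ 2 [ZMOD (p : ℤ)])).card =
    ((Finset.univ : Finset (ZMod p)).filter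
        (fun b => ∃ x : ZMod p, x ≠ 0 ∧ x ^ 3 + 4 = b * x)).card := by
  have e : ((Finset.range p).filter (fun b : ℕ =>
      ∃ x ∈ Finset.Icc 1 (p - 1),
        (x : ℤ) ^ 3 + (2) ≡ (b : ℤ) * (x : ℤ) ^ 2 [ZMOD (p : ℤ)])).card =
    ((Finset.univ : Finset (ZMod p)).filter
        (fun b => ∃ x : ZMod p, x ≠ 0 ∧ x ^ 3 + 2 = b * x ^ 2)).card := by
    apply range_card
    intro b
    apply exists_transfer
    intro x
    rw [← ZMod.intCast_eq_intCast_iff]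
    push_cast
    rfl
  rw [e]
  apply Finset.card_equiv (Equiv.mulLeft₀ (2 : ZMod p) hp2)
  intro b
  simp only [Finset.mem_filter, Finset.mem_univ, true_and,
    show (Equiv.mulLeft₀ (2 : ZMod p) hp2) b = 2 * b from rfl]
  constructor
  · rintro ⟨x, hx, h⟩
    refine ⟨2 * x⁻¹, mul_ne_zero hp2 (inv_ne_zero hx), ?_⟩
    field_simp
    linear_combination 4 * h
  · rintro ⟨x, hx, h⟩
    refine ⟨2 * x⁻¹, mul_ne_zero hp2 (inv_ne_zero hx), ?_⟩
    field_simp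
    linear_combination h

lemma V_value (p : ℕ) (hp : p.Prime) (hp1 : p % 3 = 1)
    (A B : ℤ) (hpAB : (p : ℤ) = A ^ 2 + 3 * B ^ 2) (hA : A % 3 = 1) [Fact p.Prime]
    (hp2 : (2 : ZMod p) ≠ 0) :
    ∃ T : ℤ, 3 * (((Finset.univ : Finset (ZMod p)).filter
        (fun b => ∃ x : ZMod p, x ≠ 0 ∧ x ^ 3 + 4 = b * x)).card : ℤ) = 2 * p - 1 - T ∧
      ((3 ∣ B → T = -2 * A) ∧ (¬ 3 ∣ B → T = A - 3 * legendreSym 3 B * B)) := by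
  have hp3 : (3 : ZMod p) ≠ 0 := by
    intro h
    have h' : ((3 : ℕ) : ZMod p) = 0 := by exact_mod_cast h
    rw [ZMod.natCast_eq_zero_iff] at h'
    have := (Nat.prime_dvd_prime_iff_eq hp Nat.prime_three).mp h'
    omega
  have hp4 : (4 : ZMod p) ≠ 0 := by
    have : (4 : ZMod p) = 2 * 2 := by norm_num
    rw [this]; exact mul_ne_zero hp2 hp2
  have hodd : p % 2 = 1 := by
    rcases hp.eq_two_or_odd with h | h
    · omega
    · exact h
  have hdvd : 3 ∣ Fintype.card (ZMod p) - 1 := by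
    rw [ZMod.card]; omega
  obtain ⟨χ, h3⟩ := MulChar.exists_mulChar_orderOf (ZMod p) hdvd
    (Complex.isPrimitiveRoot_exp 3 (by norm_num))
  obtain ⟨ρ, hρ⟩ : ∃ ρ : ZMod p, ρ ^ 2 + ρ + 1 = 0 := by
    have : Fact (Nat.Prime 3) := ⟨Nat.prime_three⟩
    obtain ⟨u, hu⟩ := exists_prime_orderOf_dvd_card (G := (ZMod p)ˣ) 3 (by
      rw [ZMod.card_units]; omega)
    refine ⟨u, ?_⟩
    have h1 : (u : ZMod p) ^ 3 = 1 := by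
      have := pow_orderOf_eq_one u
      rw [hu] at this
      have := congrArg Units.val this
      simpa using this
    have h2 : (u : ZMod p) - 1 ≠ 0 := by
      intro h
      have : u = 1 := Units.ext (by simpa using sub_eq_zero.mp h)
      rw [this] at hu
      simp at hu
    apply (mul_eq_zero.mp (_ : ((u : ZMod p) - 1) * _ = 0)).resolve_left h2
    linear_combination h1
  have hV := V_formula hp2 hp3
  rw [card_pairs χ h3 ρ hρ hp3 4 hp4] at hV
  have hc4 : χ 4 ^ 3 = 1 := chi_pow χ h3 4 hp4
  have hc2 : χ 2 ^ 3 = 1 := chi_pow χ h3 2 hp2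
  have h42 : χ 4 = χ 2 ^ 2 := by rw [← map_pow]; norm_num
  have hc40 : χ 4 ≠ 0 := by intro h; rw [h] at hc4; norm_num at hc4
  obtain ⟨S, hS⟩ := cnt_quad χ h3 (χ 4) hc4
  obtain ⟨S', hS'⟩ := cnt_quad χ h3 1 (one_pow 3)
  have m2 := cnt_mod_two χ h3 hp2 (χ 4)
  have m2' := cnt_mod_two χ h3 hp2 1
  have m3 := cnt_mod_three χ h3 ρ hρ hp3 (χ 4) hc40
  have m3' := cnt_mod_three χ h3 ρ hρ hp3 1 one_ne_zero
  have hfin := arith_final p A B (cnt χ (χ 4)) (cnt χ 1) hpAB hA (by omega) (χ 2 = 1)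
    ⟨_, rfl, quad_unique p hp A B _ S hpAB hS⟩ ⟨_, rfl, quad_unique p hp A B _ S' hpAB hS'⟩
    (by
      intro h
      rw [h42, h] at m2 m3 ⊢
      simp at m2 m3 ⊢
      omega)
    (by
      intro h
      have hne : χ 4 ≠ χ 2 := by
        intro h'
        apply h
        rw [h42] at h'
        rw [← hc2]
        have : χ 2 ^ 3 = χ 2 ^ 2 * χ 2 := by ring
        rw [this, h', ← sq, h']
      have hne1 : χ 4 ≠ 1 := by
        intro h'
        apply h
        rw [h42] at h'
        linear_combination hc2 - χ 2 * h'
      rw [if_neg hne] at m2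
      rw [if_neg hne1] at m3
      rw [if_neg (Ne.symm h)] at m2'
      rw [if_pos rfl] at m3'
      omega)
  refine ⟨3 * (cnt χ (χ 4) : ℤ) - p + 2, ?_, hfin⟩
  have := hp.pos
  omega

theorem stmt_7 (p : ℕ) (hp : p.Prime) (hp1 : p % 3 = 1)
    (A B : ℤ) (hpAB : (p : ℤ) = A ^ 2 + 3 * B ^ 2) (hA : A % 3 = 1) :
    ((3 : ℤ) ∣ B →
      3 * (((Finset.range p).filter (fun b : ℕ =>
      ∃ x ∈ Finset.Icc 1 (p - 1),
        (x : ℤ) ^ 3 + (4) ≡ (b : ℤ) * (x : ℤ) [ZMOD (p : ℤ)])).card : ℤ) = 2 * (p : ℤ) - 1 + 2 * A ∧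
      3 * (((Finset.range p).filter (fun b : ℕ =>
      ∃ x ∈ Finset.Icc 1 (p - 1),
        (x : ℤ) ^ 3 + (2) ≡ (b : ℤ) * (x : ℤ) ^ 2 [ZMOD (p : ℤ)])).card : ℤ) = 2 * (p : ℤ) - 1 + 2 * A) ∧
    (¬ (3 : ℤ) ∣ B →
      3 * (((Finset.range p).filter (fun b : ℕ =>
      ∃ x ∈ Finset.Icc 1 (p - 1),
        (x : ℤ) ^ 3 + (4) ≡ (b : ℤ) * (x : ℤ) [ZMOD (p : ℤ)])).card : ℤ) = 2 * (p : ℤ) - 1 - A + 3 * legendreSym 3 B * B ∧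
      3 * (((Finset.range p).filter (fun b : ℕ =>
      ∃ x ∈ Finset.Icc 1 (p - 1),
        (x : ℤ) ^ 3 + (2) ≡ (b : ℤ) * (x : ℤ) ^ 2 [ZMOD (p : ℤ)])).card : ℤ) = 2 * (p : ℤ) - 1 - A + 3 * legendreSym 3 B * B) := by
  have : Fact p.Prime := ⟨hp⟩
  have hp2 : (2 : ZMod p) ≠ 0 := by
    intro h
    have h' : ((2 : ℕ) : ZMod p) = 0 := by exact_mod_cast h
    rw [ZMod.natCast_eq_zero_iff] at h'
    have := (Nat.prime_dvd_prime_iff_eq hp Nat.prime_two).mp h'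
    omega
  obtain ⟨T, hT, h1, h2⟩ := V_value p hp hp1 A B hpAB hA hp2
  rw [V_first, V_second hp2, hT]
  refine ⟨fun h => ?_, fun h => ?_⟩
  · rw [h1 h]
    constructor <;> ring
  · rw [h2 h]
    constructor <;> ring
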